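/- Let h(Q,n,k;·) and b(Q,n,k;·) denote the p.m.f.s on S^k of sampling k ≤ n balls without and with replacement, respectively, from an urn containing n balls of c different colours, where the n-type Q describes the composition of the balls in the urn. Then ‖h(Q,n,k;·) − b(Q,n,k;·)‖_TV ≤ 2ck/n. -/

import Mathlib

open MeasureTheory
open scoped ENNReal

/-- The total variation distance `‖μ − ν‖_TV := 2 sup_A |μ(A) − ν(A)|`, the supremum
being over measurable sets `A`. -/
noncomputable def tvDist {α : Type*} [MeasurableSpace α] (μ ν : Measure α) : ℝ :=
  2 * ⨆ A : {A : Set α // MeasurableSet A}, |(μ A.1).toReal - (ν A.1).toReal|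

/-- The law `h(Q,n,k;·)` on `S^k` of the sequence of colours of `k` balls drawn uniformly at
random *without replacement* from an urn of `n` balls whose colours are given by
`col : Fin n → Fin c` (the `n`-type `Q` describing the urn is `Q(j) = #col⁻¹(j)/n`):
the uniform average of the colour sequences over all injective sequences of `k` balls. -/
noncomputable def drawWithoutReplacement (n c k : ℕ) (col : Fin n → Fin c) :
    Measure (Fin k → Fin c) :=
  (((Finset.univ.filter (fun f : Fin k → Fin n => Function.Injective f)).card : ℝ≥0∞))⁻¹ •
    ∑ f ∈ Finset.univ.filter (fun f : Fin k → Fin n => Function.Injective f),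
      Measure.dirac (col ∘ f)

/-- The single-draw colour distribution `Q` of an urn of `n` balls with colours
`col : Fin n → Fin c`, i.e. `Q(j) = #col⁻¹(j)/n`. -/
noncomputable def urnColourDist (n c : ℕ) (col : Fin n → Fin c) : Measure (Fin c) :=
  ((n : ℝ≥0∞))⁻¹ • ∑ i : Fin n, Measure.dirac (col i)

/-- The law `b(Q,n,k;·) = Q^k` on `S^k` of `k` i.i.d. draws (*with replacement*) from the urn. -/
noncomputable def drawWithReplacement (n c k : ℕ) (col : Fin n → Fin c) :
    Measure (Fin k → Fin c) :=
  Measure.pi fun _ : Fin k => urnColourDist n c col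

/-!
Draw the balls one at a time. By the chain rule, the relative entropy `D` of drawing without
replacement from drawing with replacement is the sum over the draws of the mean relative entropy
between the conditional law of the next colour and `Q`. Each of these is at most the mean of a `χ²`
divergence, that is, a sum over the colours of `Var / Q(j)`, where `Var` is the variance of the
proportion of balls of colour `j` left in the urn. This is a hypergeometric variance, and summing
gives `D ≤ (c - 1) (k / n) ^ 2` when `2 * k ≤ n`. Since the total variation distance is at most
`2 * √D`, it is at most `2 * √(c - 1) * k / n`. When `2 * k ≥ n` and `c ≥ 2` the claimed bound is at
least `2` and there is nothing to prove.
-/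

open scoped Finset
open Fintype (card)

section TotalVariation

variable {α : Type*} [MeasurableSpace α] (μ ν : Measure α)

lemma tvDist_le {C : ℝ}
    (h : ∀ A, MeasurableSet A → 2 * |μ.real A - ν.real A| ≤ C) : tvDist μ ν ≤ C := by
  have : Nonempty {A : Set α // MeasurableSet A} := ⟨⟨∅, .empty⟩⟩
  rw [tvDist, Real.mul_iSup_of_nonneg zero_le_two]
  exact ciSup_le fun A => h A A.2

variable [IsProbabilityMeasure μ] [IsProbabilityMeasure ν]

lemma tvDist_le_two : tvDist μ ν ≤ 2 :=
  tvDist_le μ ν fun A _ => by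
    have h : |μ.real A - ν.real A| ≤ 1 :=
      abs_sub_le_of_nonneg_of_le measureReal_nonneg measureReal_le_one measureReal_nonneg
        measureReal_le_one
    linarith

lemma tvDist_le_sum_abs_sub [Fintype α] [MeasurableSingletonClass α] :
    tvDist μ ν ≤ ∑ a, |μ.real {a} - ν.real {a}| := by
  classical
  have abs_sub_le (A : Finset α) :
      |μ.real A - ν.real A| ≤ ∑ a ∈ A, |μ.real {a} - ν.real {a}| := by
    rw [← sum_measureReal_singleton, ← sum_measureReal_singleton, ← Finset.sum_sub_distrib]
    exact Finset.abs_sum_le_sum_abs _ _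
  refine tvDist_le μ ν fun A hA => ?_
  have on_set := abs_sub_le A.toFinset
  have on_compl := abs_sub_le A.toFinsetᶜ
  rw [Finset.coe_compl, Set.coe_toFinset, probReal_compl_eq_one_sub hA,
    probReal_compl_eq_one_sub hA, sub_sub_sub_cancel_left, abs_sub_comm] at on_compl
  rw [Set.coe_toFinset] at on_set
  rw [← Finset.sum_add_sum_compl A.toFinset]
  linarith

lemma tvDist_eq_zero_of_subsingleton [Subsingleton α] : tvDist μ ν = 0 := by
  have h : μ = ν := by
    ext A -
    obtain rfl | rfl := A.eq_empty_or_nonempty.imp_right Set.Nonempty.eq_univ <;> simp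
  simp [tvDist, h]

end TotalVariation

section RelativeEntropy

variable {α β : Type*} [Fintype α] [Fintype β]

/-- The relative entropy (Kullback–Leibler divergence) of `p` from `q`, for probability mass
functions on a finite type. It is a finite real sum rather than `InformationTheory.klDiv`, so that
conditional laws may take arbitrary values off the support of the law they are conditioned on. -/
noncomputable def relEntropy (p q : α → ℝ) : ℝ := ∑ a, p a * Real.log (p a / q a)

lemma sq_sqrt_sub_sqrt_le {p q : ℝ} (hp : 0 ≤ p) (hq : 0 ≤ q) (hpq : q = 0 → p = 0) :
    (√p - √q) ^ 2 ≤ p * Real.log (p / q) - p + q := by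
  obtain rfl | hp := hp.eq_or_lt
  · simp [Real.sq_sqrt hq]
  have hq : 0 < q := hq.lt_of_ne' fun h => hp.ne' (hpq h)
  have log_le : Real.log (√(q / p)) ≤ √(q / p) - 1 :=
    Real.log_le_sub_one_of_pos (by positivity)
  have mul_sqrt : p * √(q / p) = √p * √q := by
    rw [Real.sqrt_div hq.le, mul_div_left_comm, Real.div_sqrt, mul_comm]
  calc (√p - √q) ^ 2 = 2 * p * (1 - √(q / p)) - p + q := by
        rw [sub_sq, Real.sq_sqrt hp.le, Real.sq_sqrt hq.le]
        linear_combination 2 * mul_sqrt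
    _ ≤ 2 * p * (-Real.log √(q / p)) - p + q := by
        gcongr
        linarith
    _ = p * Real.log (p / q) - p + q := by
        rw [Real.log_sqrt (by positivity), ← inv_div p q, Real.log_inv]
        ring

-- Cauchy–Schwarz on `|p - q| = |√p - √q| * (√p + √q)`. Pinsker's inequality has `2` for `4`.
lemma sq_sum_abs_sub_le_four_mul_relEntropy {p q : α → ℝ} (hp : ∀ a, 0 ≤ p a) (hq : ∀ a, 0 ≤ q a)
    (hpq : ∀ a, q a = 0 → p a = 0) (hp1 : ∑ a, p a = 1) (hq1 : ∑ a, q a = 1) :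
    (∑ a, |p a - q a|) ^ 2 ≤ 4 * relEntropy p q := by
  have abs_sub_eq (a : α) : |p a - q a| = |√(p a) - √(q a)| * (√(p a) + √(q a)) := by
    rw [← abs_of_nonneg (a := √(p a) + √(q a)) (by positivity), ← abs_mul, mul_comm,
      ← sq_sub_sq, Real.sq_sqrt (hp a), Real.sq_sqrt (hq a)]
  have hellinger_le : ∑ a, |√(p a) - √(q a)| ^ 2 ≤ relEntropy p q := calc
    _ ≤ ∑ a, (p a * Real.log (p a / q a) - p a + q a) := by
        gcongr with a
        rw [sq_abs]
        exact sq_sqrt_sub_sqrt_le (hp a) (hq a) (hpq a)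
    _ = relEntropy p q := by
        rw [Finset.sum_add_distrib, Finset.sum_sub_distrib, hp1, hq1, relEntropy]
        ring
  have sum_sq_le : ∑ a, (√(p a) + √(q a)) ^ 2 ≤ 4 := calc
    _ ≤ ∑ a, 2 * (p a + q a) := by
        gcongr with a
        simpa only [Real.sq_sqrt (hp a), Real.sq_sqrt (hq a)] using
          add_sq_le (a := √(p a)) (b := √(q a))
    _ = 4 := by
        rw [← Finset.mul_sum, Finset.sum_add_distrib, hp1, hq1]
        norm_num
  have relEntropy_nonneg : 0 ≤ relEntropy p q :=
    (Finset.sum_nonneg fun _ _ => sq_nonneg _).trans hellinger_le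
  calc (∑ a, |p a - q a|) ^ 2
      ≤ (∑ a, |√(p a) - √(q a)| ^ 2) * ∑ a, (√(p a) + √(q a)) ^ 2 := by
        simp only [abs_sub_eq]
        exact Finset.sum_mul_sq_le_sq_mul_sq _ _ _
    _ ≤ relEntropy p q * 4 := by
        gcongr
    _ = 4 * relEntropy p q := mul_comm _ _

lemma relEntropy_le_sum_sq_div {p q : α → ℝ} (hp : ∀ a, 0 ≤ p a) (hq : ∀ a, 0 ≤ q a)
    (hpq : ∀ a, q a = 0 → p a = 0) (hsum : ∑ a, p a = ∑ a, q a) :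
    relEntropy p q ≤ ∑ a, (p a - q a) ^ 2 / q a := by
  have mul_log_le (a : α) :
      p a * Real.log (p a / q a) ≤ (p a - q a) ^ 2 / q a + (p a - q a) := by
    obtain hpa | hpa := (hp a).eq_or_lt
    · by_cases hqa : q a = 0
      · simp [← hpa, hqa]
      · simp [← hpa, sq, hqa]
    · have hqa : 0 < q a := (hq a).lt_of_ne' fun h => hpa.ne' (hpq a h)
      calc p a * Real.log (p a / q a) ≤ p a * (p a / q a - 1) := by
            gcongr
            exact Real.log_le_sub_one_of_pos (by positivity)
        _ = (p a - q a) ^ 2 / q a + (p a - q a) := by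
            field_simp
            ring
  calc relEntropy p q ≤ ∑ a, ((p a - q a) ^ 2 / q a + (p a - q a)) :=
        Finset.sum_le_sum fun a _ => mul_log_le a
    _ = ∑ a, (p a - q a) ^ 2 / q a := by
        rw [Finset.sum_add_distrib, Finset.sum_sub_distrib, hsum, sub_self, add_zero]

lemma relEntropy_prod {p q : α → ℝ} {κ η : α → β → ℝ} (hpq : ∀ a, q a = 0 → p a = 0)
    (hκη : ∀ a, p a ≠ 0 → ∀ b, η a b = 0 → κ a b = 0) (hκ : ∀ a, ∑ b, κ a b = 1) :
    relEntropy (fun x : α × β => p x.1 * κ x.1 x.2) (fun x => q x.1 * η x.1 x.2) =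
      relEntropy p q + ∑ a, p a * relEntropy (κ a) (η a) := by
  have mul_log_eq (a : α) (b : β) :
      p a * κ a b * Real.log (p a * κ a b / (q a * η a b)) =
        p a * Real.log (p a / q a) * κ a b + p a * (κ a b * Real.log (κ a b / η a b)) := by
    by_cases hpa : p a = 0
    · simp [hpa]
    by_cases hκab : κ a b = 0
    · simp [hκab]
    rw [mul_div_mul_comm, Real.log_mul (div_ne_zero hpa fun h => hpa (hpq a h))
      (div_ne_zero hκab fun h => hκab (hκη a hpa b h))]
    ring
  simp only [relEntropy, Fintype.sum_prod_type, mul_log_eq, Finset.sum_add_distrib,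
    ← Finset.mul_sum, hκ, mul_one]

lemma relEntropy_comp_equiv (e : β ≃ α) (p q : α → ℝ) :
    relEntropy (p ∘ e) (q ∘ e) = relEntropy p q :=
  e.sum_comp fun a => p a * Real.log (p a / q a)

end RelativeEntropy

section UniformAverage

variable {ι α : Type*} [MeasurableSpace α] (s : Finset ι) (g : ι → α)

lemma isProbabilityMeasure_inv_card_smul_sum_dirac (hs : s.Nonempty) :
    IsProbabilityMeasure ((#s : ℝ≥0∞)⁻¹ • ∑ i ∈ s, Measure.dirac (g i)) where
  measure_univ := by
    simpa using ENNReal.inv_mul_cancel (by simpa using hs.ne_empty) (ENNReal.natCast_ne_top _)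

lemma inv_card_smul_sum_dirac_real_singleton [DecidableEq α] [MeasurableSingletonClass α] (a : α) :
    ((#s : ℝ≥0∞)⁻¹ • ∑ i ∈ s, Measure.dirac (g i)).real {a} = (#{i ∈ s | g i = a} : ℝ) / #s := by
  have sum_dirac : (∑ i ∈ s, Measure.dirac (g i)) {a} = (#{i ∈ s | g i = a} : ℝ≥0∞) := by
    simp [Measure.finsetSum_apply, Set.indicator_apply]
  rw [measureReal_ennreal_smul_apply, measureReal_def, sum_dirac, ENNReal.toReal_inv,
    ENNReal.toReal_natCast, ENNReal.toReal_natCast, div_eq_inv_mul]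

end UniformAverage

lemma eval_descPochhammer_mul_eval_sub_comm {R : Type*} [CommRing R] (a b : ℕ) (r : R) :
    (descPochhammer R a).eval r * (descPochhammer R b).eval (r - a) =
      (descPochhammer R b).eval r * (descPochhammer R a).eval (r - b) := by
  have eval_add (a b : ℕ) : (descPochhammer R a).eval r * (descPochhammer R b).eval (r - a) =
      (descPochhammer R (a + b)).eval r := by
    simp [← descPochhammer_mul]
  rw [eval_add, eval_add, add_comm]

lemma sum_fin_succ_arrow {S M : Type*} [Fintype S] [AddCommMonoid M] {k : ℕ}
    (F : (Fin (k + 1) → S) → M) :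
    ∑ y, F y = ∑ x : Fin k → S, ∑ j, F (Fin.cons j x) := by
  rw [← (Fin.consEquiv fun _ => S).sum_comp, Fintype.sum_prod_type_right]
  rfl

lemma card_filter_injective {A B : Type*} [Fintype A] [Fintype B] [DecidableEq A]
    [DecidableEq B] : #{f : A → B | f.Injective} = (card B).descFactorial (card A) := by
  rw [← Fintype.card_subtype, Fintype.card_congr (Equiv.subtypeInjectiveEquivEmbedding _ _),
    Fintype.card_embedding_eq]

namespace Urn

variable {B S : Type*} [DecidableEq S] {k : ℕ}

section Counting

/-- The number of entries of colour `j` in a family of colours; applied both to the urn itself and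
to the colour sequences drawn from it. -/
def colourCount {ι : Type*} [Fintype ι] (x : ι → S) (j : S) : ℕ := #{i | x i = j}

lemma sum_colourCount {ι : Type*} [Fintype ι] [Fintype S] (x : ι → S) :
    ∑ j, colourCount x j = card ι :=
  (Finset.card_eq_sum_card_fiberwise fun _ _ => Finset.mem_coe.2 (Finset.mem_univ _)).symm

lemma colourCount_cons (x : Fin k → S) (i j : S) :
    colourCount (Fin.cons i x : Fin (k + 1) → S) j =
      (if i = j then 1 else 0) + colourCount x j := by
  simp only [colourCount, Finset.card_filter, Fin.sum_univ_succ, Fin.cons_zero, Fin.cons_succ]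

variable [Fintype B] (col : B → S)

/-- The number of balls of colour `j` left in the urn once the colour sequence `x` has been drawn.
It is a real number, negative when the urn has too few balls of colour `j` to produce `x`. -/
def remaining (x : Fin k → S) (j : S) : ℝ := colourCount col j - colourCount x j

lemma remaining_cons (x : Fin k → S) (i j : S) :
    remaining col (Fin.cons i x : Fin (k + 1) → S) j =
      remaining col x j - if i = j then 1 else 0 := by
  rw [remaining, remaining, colourCount_cons]
  push_cast
  ring

lemma remaining_le_colourCount (x : Fin k → S) (j : S) : remaining col x j ≤ colourCount col j :=
  sub_le_self _ (Nat.cast_nonneg _)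

lemma sum_remaining [Fintype S] (x : Fin k → S) : ∑ j, remaining col x j = card B - k := by
  simp only [remaining, Finset.sum_sub_distrib]
  rw [← Nat.cast_sum, ← Nat.cast_sum, sum_colourCount, sum_colourCount, Fintype.card_fin]

lemma sum_remaining_mul_descPochhammer_cons [Fintype S] (a : ℕ) (x : Fin k → S) (j : S) :
    ∑ i, remaining col x i *
        (descPochhammer ℝ a).eval (remaining col (Fin.cons i x : Fin (k + 1) → S) j) =
      (descPochhammer ℝ a).eval (remaining col x j) * (card B - a - k) := by
  set p := descPochhammer ℝ a
  set r := remaining col x j with hr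
  calc ∑ i, remaining col x i * p.eval (remaining col (Fin.cons i x : Fin (k + 1) → S) j)
      = ∑ i, (remaining col x i * p.eval r +
          if i = j then remaining col x i * (p.eval (r - 1) - p.eval r) else 0) := by
        refine Finset.sum_congr rfl fun i _ => ?_
        rw [remaining_cons, ← hr]
        split_ifs
        · ring
        · rw [sub_zero, add_zero]
    _ = (card B - k) * p.eval r + r * (p.eval (r - 1) - p.eval r) := by
        rw [Finset.sum_add_distrib, ← Finset.sum_mul, sum_remaining,
          Finset.sum_ite_eq' Finset.univ j, if_pos (Finset.mem_univ j)]
    _ = p.eval r * (card B - a - k) := by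
        have mul_eval_sub_one : r * p.eval (r - 1) = p.eval r * (r - a) := by
          simpa using eval_descPochhammer_mul_eval_sub_comm 1 a r
        linear_combination mul_eval_sub_one

variable [DecidableEq B]

lemma card_undrawn_eq_remaining {f : Fin k → B} (hf : f.Injective) (j : S) :
    (#{b | b ∉ Set.range f ∧ col b = j} : ℝ) = remaining col (col ∘ f) j := by
  have drawn : colourCount (col ∘ f) j = #{b | col b = j ∧ b ∈ Set.range f} := by
    rw [colourCount, ← Finset.card_map ⟨f, hf⟩]
    congr 1
    ext b
    aesop
  have split : #{b | col b = j ∧ b ∈ Set.range f} + #{b | b ∉ Set.range f ∧ col b = j} =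
      colourCount col j := by
    simp only [colourCount, and_comm (b := col _ = j), ← Finset.filter_filter]
    exact Finset.card_filter_add_card_filter_not _
  rw [remaining, drawn, ← split]
  push_cast
  ring

/-- The number of ordered draws of distinct balls whose colour sequence is `x`. -/
def injDrawCount (x : Fin k → S) : ℕ := #{f : Fin k → B | f.Injective ∧ col ∘ f = x}

lemma injDrawCount_cons (x : Fin k → S) (j : S) :
    (injDrawCount col (Fin.cons j x : Fin (k + 1) → S) : ℝ) =
      injDrawCount col x * remaining col x j := by
  have extend (f : Fin k → B) :
      (∑ b, if (Fin.cons b f : Fin (k + 1) → B).Injective ∧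
        col ∘ (Fin.cons b f : Fin (k + 1) → B) = Fin.cons j x then (1 : ℝ) else 0) =
      if f.Injective ∧ col ∘ f = x then remaining col x j else 0 := by
    simp only [Fin.cons_injective_iff, Fin.comp_cons, Fin.cons_inj]
    split_ifs with h
    · obtain ⟨hf, rfl⟩ := h
      simp only [hf, and_true, Finset.sum_boole, card_undrawn_eq_remaining col hf]
    · exact Finset.sum_eq_zero fun b _ => if_neg (by tauto)
  rw [injDrawCount, injDrawCount, ← Finset.sum_boole, sum_fin_succ_arrow]
  simp only [extend, ← Finset.sum_filter, Finset.sum_const, nsmul_eq_mul]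

lemma exists_injective_of_injDrawCount_ne_zero {col : B → S} {x : Fin k → S}
    (hx : injDrawCount col x ≠ 0) : ∃ f : Fin k → B, f.Injective ∧ col ∘ f = x := by
  obtain ⟨f, hf⟩ := Finset.card_ne_zero.1 hx
  exact ⟨f, (Finset.mem_filter.1 hf).2⟩

lemma remaining_nonneg {col : B → S} {x : Fin k → S} (hx : injDrawCount col x ≠ 0) (j : S) :
    0 ≤ remaining col x j := by
  obtain ⟨f, hf, rfl⟩ := exists_injective_of_injDrawCount_ne_zero hx
  exact card_undrawn_eq_remaining col hf j ▸ Nat.cast_nonneg _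

lemma sum_injDrawCount_mul_descPochhammer [Fintype S] (a : ℕ) (j : S) :
    ∑ x : Fin k → S, injDrawCount col x * (descPochhammer ℝ a).eval (remaining col x j) =
      (descPochhammer ℝ a).eval (colourCount col j : ℝ) *
        (descPochhammer ℝ k).eval ((card B : ℝ) - a) := by
  induction k with
  | zero =>
    simp [injDrawCount, remaining, colourCount, Function.injective_of_subsingleton,
      eq_iff_true_of_subsingleton]
  | succ k ih =>
    rw [sum_fin_succ_arrow, descPochhammer_succ_eval, ← mul_assoc, ← ih, Finset.sum_mul]
    refine Finset.sum_congr rfl fun x _ => ?_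
    simp only [injDrawCount_cons, mul_assoc, ← Finset.mul_sum,
      sum_remaining_mul_descPochhammer_cons]

end Counting

section MassFunctions

variable [Fintype B] (col : B → S)

/-- The proportion of balls of colour `j`, i.e. the law `Q` of a single draw. -/
noncomputable def colourFreq (j : S) : ℝ := colourCount col j / card B

/-- The conditional probability that the next ball has colour `j` when the colour sequence `x` has
been drawn without replacement. -/
noncomputable def nextColourProb (x : Fin k → S) (j : S) : ℝ := remaining col x j / (card B - k)

/-- The probability mass function of `k` draws with replacement. -/
noncomputable def pmfWithReplacement (x : Fin k → S) : ℝ := ∏ i, colourFreq col (x i)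

/-- The probability mass function of `k` draws without replacement. -/
noncomputable def pmfWithoutReplacement [DecidableEq B] (x : Fin k → S) : ℝ :=
  injDrawCount col x / (card B).descFactorial k

lemma colourFreq_nonneg (j : S) : 0 ≤ colourFreq col j := by
  unfold colourFreq
  positivity

lemma colourFreq_le_one (j : S) : colourFreq col j ≤ 1 :=
  div_le_one_of_le₀ (mod_cast Finset.card_le_univ _) (Nat.cast_nonneg _)

lemma sum_colourFreq [Fintype S] [Nonempty B] : ∑ j, colourFreq col j = 1 := by
  simp only [colourFreq, ← Finset.sum_div]
  rw [← Nat.cast_sum, sum_colourCount, div_self (by simp)]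

lemma sum_nextColourProb [Fintype S] (hk : k < card B) (x : Fin k → S) :
    ∑ j, nextColourProb col x j = 1 := by
  simp only [nextColourProb, ← Finset.sum_div, sum_remaining]
  exact div_self (sub_ne_zero.2 (mod_cast hk.ne'))

lemma pmfWithReplacement_nonneg (x : Fin k → S) : 0 ≤ pmfWithReplacement col x :=
  Finset.prod_nonneg fun _ _ => colourFreq_nonneg col _

lemma pmfWithReplacement_cons (x : Fin k → S) (j : S) :
    pmfWithReplacement col (Fin.cons j x : Fin (k + 1) → S) =
      pmfWithReplacement col x * colourFreq col j := by
  simp only [pmfWithReplacement, Fin.prod_univ_succ, Fin.cons_zero, Fin.cons_succ, mul_comm]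

variable [DecidableEq B]

lemma pmfWithoutReplacement_nonneg (x : Fin k → S) : 0 ≤ pmfWithoutReplacement col x := by
  unfold pmfWithoutReplacement
  positivity

lemma pmfWithoutReplacement_cons (hk : k ≤ card B) (x : Fin k → S) (j : S) :
    pmfWithoutReplacement col (Fin.cons j x : Fin (k + 1) → S) =
      pmfWithoutReplacement col x * nextColourProb col x j := by
  rw [pmfWithoutReplacement, pmfWithoutReplacement, nextColourProb, injDrawCount_cons,
    Nat.descFactorial_succ, Nat.cast_mul, Nat.cast_sub hk, mul_comm (_ - _ : ℝ), mul_div_mul_comm]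

variable {col}

lemma injDrawCount_ne_zero {x : Fin k → S} (hx : pmfWithoutReplacement col x ≠ 0) :
    injDrawCount col x ≠ 0 := fun h => hx (by simp [pmfWithoutReplacement, h])

lemma nextColourProb_nonneg (hk : k ≤ card B) {x : Fin k → S}
    (hx : pmfWithoutReplacement col x ≠ 0) (j : S) : 0 ≤ nextColourProb col x j :=
  div_nonneg (remaining_nonneg (injDrawCount_ne_zero hx) j) (sub_nonneg.2 (mod_cast hk))

lemma nextColourProb_eq_zero_of_colourFreq [Nonempty B] {x : Fin k → S}
    (hx : pmfWithoutReplacement col x ≠ 0) {j : S} (hj : colourFreq col j = 0) :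
    nextColourProb col x j = 0 := by
  have hj : (colourCount col j : ℝ) = 0 :=
    (div_eq_zero_iff.1 hj).resolve_right (mod_cast Fintype.card_ne_zero)
  have hr : remaining col x j = 0 :=
    le_antisymm (hj ▸ remaining_le_colourCount col x j)
      (remaining_nonneg (injDrawCount_ne_zero hx) j)
  rw [nextColourProb, hr, zero_div]

lemma pmfWithoutReplacement_eq_zero {x : Fin k → S} (hx : pmfWithReplacement col x = 0) :
    pmfWithoutReplacement col x = 0 := by
  by_contra h
  obtain ⟨f, -, rfl⟩ := exists_injective_of_injDrawCount_ne_zero (injDrawCount_ne_zero h)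
  obtain ⟨i, -, hi⟩ := Finset.prod_eq_zero_iff.1 hx
  have : Nonempty B := ⟨f i⟩
  have : colourCount col (col (f i)) ≠ 0 :=
    Finset.card_ne_zero.2 ⟨f i, by simp⟩
  exact div_ne_zero (mod_cast this) (mod_cast Fintype.card_ne_zero) hi

variable (col) [Fintype S]

lemma sum_pmfWithoutReplacement_mul_descPochhammer (hk : k ≤ card B) (a : ℕ) (j : S) :
    (∑ x : Fin k → S, pmfWithoutReplacement col x *
        (descPochhammer ℝ a).eval (remaining col x j)) *
        (descPochhammer ℝ a).eval (card B : ℝ) =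
      (descPochhammer ℝ a).eval (colourCount col j : ℝ) *
        (descPochhammer ℝ a).eval ((card B : ℝ) - k) := by
  have hd : ((card B).descFactorial k : ℝ) ≠ 0 :=
    mod_cast (Nat.descFactorial_pos.2 hk).ne'
  simp only [pmfWithoutReplacement, div_mul_eq_mul_div, ← Finset.sum_div,
    sum_injDrawCount_mul_descPochhammer]
  rw [div_eq_iff hd, ← descPochhammer_eval_eq_descFactorial]
  linear_combination (descPochhammer ℝ a).eval (colourCount col j : ℝ) *
    eval_descPochhammer_mul_eval_sub_comm a k (card B : ℝ)

lemma variance_nextColourProb (hk : k < card B) (hB : 2 ≤ card B) (j : S) :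
    ∑ x : Fin k → S, pmfWithoutReplacement col x *
        (nextColourProb col x j - colourFreq col j) ^ 2 =
      colourFreq col j * (1 - colourFreq col j) * (k / ((card B - k) * (card B - 1))) := by
  have hn : (2 : ℝ) ≤ card B := mod_cast hB
  have hd : 0 < (card B - k : ℝ) := sub_pos.2 (mod_cast hk)
  have moment := fun a => sum_pmfWithoutReplacement_mul_descPochhammer col hk.le a j
  have moment0 : ∑ x : Fin k → S, pmfWithoutReplacement col x = 1 := by simpa using moment 0
  have moment1 : (∑ x : Fin k → S, pmfWithoutReplacement col x * remaining col x j) * card B =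
      colourCount col j * (card B - k) := by simpa using moment 1
  have moment2 : (∑ x : Fin k → S, pmfWithoutReplacement col x *
        (remaining col x j * (remaining col x j - 1))) * (card B * (card B - 1)) =
      colourCount col j * (colourCount col j - 1) * ((card B - k) * (card B - k - 1)) := by
    simpa [descPochhammer_succ_eval] using moment 2
  rw [← eq_div_iff (by positivity)] at moment1
  rw [← eq_div_iff (by nlinarith)] at moment2
  calc _ = (∑ x : Fin k → S, pmfWithoutReplacement col x *
            (remaining col x j * (remaining col x j - 1))) / (card B - k) ^ 2 +
          (∑ x : Fin k → S, pmfWithoutReplacement col x * remaining col x j) *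
            (1 / (card B - k) ^ 2 - 2 * colourFreq col j / (card B - k)) +
          (∑ x : Fin k → S, pmfWithoutReplacement col x) * colourFreq col j ^ 2 := by
        simp only [Finset.sum_mul, Finset.sum_div, ← Finset.sum_add_distrib, nextColourProb]
        refine Finset.sum_congr rfl fun x _ => ?_
        field_simp
        ring
    _ = _ := by
        have hn1 : (card B - 1 : ℝ) ≠ 0 := by linarith
        rw [moment0, moment1, moment2, colourFreq]
        field_simp
        ring

lemma sum_mul_relEntropy_nextColourProb_le (hk : k < card B) (hB : 2 ≤ card B) :
    ∑ x : Fin k → S, pmfWithoutReplacement col x *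
        relEntropy (nextColourProb col x) (colourFreq col) ≤
      (card S - 1) * (k / ((card B - k) * (card B - 1))) := by
  have : Nonempty B := Fintype.card_pos_iff.1 (by lia)
  have hn : (2 : ℝ) ≤ card B := mod_cast hB
  have hd : 0 < (card B - k : ℝ) := sub_pos.2 (mod_cast hk)
  set V : ℝ := k / ((card B - k) * (card B - 1))
  have hV : 0 ≤ V := div_nonneg k.cast_nonneg (mul_nonneg hd.le (by linarith))
  calc _ ≤ ∑ x : Fin k → S, pmfWithoutReplacement col x *
          ∑ j, (nextColourProb col x j - colourFreq col j) ^ 2 / colourFreq col j := by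
        refine Finset.sum_le_sum fun x _ => ?_
        by_cases hx : pmfWithoutReplacement col x = 0
        · simp only [hx, zero_mul, le_refl]
        gcongr
        · exact pmfWithoutReplacement_nonneg col x
        · exact relEntropy_le_sum_sq_div (nextColourProb_nonneg hk.le hx) (colourFreq_nonneg col)
            (fun _ => nextColourProb_eq_zero_of_colourFreq hx)
            ((sum_nextColourProb col hk x).trans (sum_colourFreq col).symm)
    _ = ∑ j, colourFreq col j * (1 - colourFreq col j) * V / colourFreq col j := by
        simp only [Finset.mul_sum]
        rw [Finset.sum_comm]
        refine Finset.sum_congr rfl fun j _ => ?_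
        rw [← variance_nextColourProb col hk hB, Finset.sum_div]
        simp only [mul_div_assoc]
    _ ≤ ∑ j, (1 - colourFreq col j) * V := by
        refine Finset.sum_le_sum fun j _ => ?_
        rw [mul_assoc, mul_div_right_comm]
        exact mul_le_of_le_one_left
          (mul_nonneg (sub_nonneg.2 (colourFreq_le_one col j)) hV) (div_self_le_one _)
    _ = (card S - 1) * V := by
        rw [← Finset.sum_mul, Finset.sum_sub_distrib, sum_colourFreq]
        simp

lemma relEntropy_pmf_succ (hk : k < card B) :
    relEntropy (pmfWithoutReplacement col (k := k + 1)) (pmfWithReplacement col) =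
      relEntropy (pmfWithoutReplacement col (k := k)) (pmfWithReplacement col) +
        ∑ x : Fin k → S, pmfWithoutReplacement col x *
          relEntropy (nextColourProb col x) (colourFreq col) := by
  have : Nonempty B := Fintype.card_pos_iff.1 (by lia)
  let e := (Equiv.prodComm (Fin k → S) S).trans (Fin.consEquiv fun _ : Fin (k + 1) => S)
  rw [← relEntropy_comp_equiv e, ← relEntropy_prod (fun _ => pmfWithoutReplacement_eq_zero)
    (fun _ hx _ => nextColourProb_eq_zero_of_colourFreq hx) (sum_nextColourProb col hk)]
  congr 1 <;> ext ⟨x, j⟩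
  · exact pmfWithoutReplacement_cons col hk.le x j
  · exact pmfWithReplacement_cons col x j

lemma relEntropy_pmf_le (hk : 2 * k ≤ card B) :
    relEntropy (pmfWithoutReplacement col (k := k)) (pmfWithReplacement col) ≤
      (card S - 1) * (k / card B) ^ 2 := by
  induction k with
  | zero => simp [relEntropy, pmfWithReplacement, pmfWithoutReplacement, injDrawCount,
      Function.injective_of_subsingleton, eq_iff_true_of_subsingleton]
  | succ k ih =>
    have : Nonempty B := Fintype.card_pos_iff.1 (by lia)
    have : Nonempty S := ‹Nonempty B›.map col
    have hS : (1 : ℝ) ≤ card S := mod_cast Fintype.card_pos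
    have hn : 2 * ((k : ℝ) + 1) ≤ card B := mod_cast hk
    have increment_le : (k : ℝ) / ((card B - k) * (card B - 1)) ≤ 2 * k / card B ^ 2 := by
      have sq_le : (card B : ℝ) ^ 2 ≤ 2 * ((card B - k) * (card B - 1)) := by nlinarith
      rw [div_le_div_iff₀ (by nlinarith) (by positivity)]
      nlinarith [mul_le_mul_of_nonneg_left sq_le k.cast_nonneg]
    calc _ ≤ (card S - 1) * ((k : ℝ) / card B) ^ 2 +
          (card S - 1) * (k / ((card B - k) * (card B - 1)) : ℝ) := by
          rw [relEntropy_pmf_succ col (by lia)]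
          exact add_le_add (ih (by lia))
            (sum_mul_relEntropy_nextColourProb_le col (by lia) (by lia))
      _ ≤ (card S - 1) * ((k : ℝ) / card B) ^ 2 + (card S - 1) * (2 * k / card B ^ 2) := by
          gcongr
      _ = (card S - 1) * ((k ^ 2 + 2 * k) / card B ^ 2) := by ring
      _ ≤ (card S - 1) * (((k + 1 : ℕ) : ℝ) / card B) ^ 2 := by
          rw [div_pow]
          gcongr
          push_cast
          nlinarith

end MassFunctions

section Laws

variable {n c : ℕ} (col : Fin n → Fin c)

lemma urnColourDist_eq : urnColourDist n c col =
    (#(Finset.univ : Finset (Fin n)) : ℝ≥0∞)⁻¹ • ∑ i, Measure.dirac (col i) := by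
  rw [urnColourDist, Finset.card_fin]

lemma isProbabilityMeasure_urnColourDist [NeZero n] :
    IsProbabilityMeasure (urnColourDist n c col) := by
  rw [urnColourDist_eq]
  exact isProbabilityMeasure_inv_card_smul_sum_dirac _ _ Finset.univ_nonempty

lemma urnColourDist_real_singleton (j : Fin c) :
    (urnColourDist n c col).real {j} = colourFreq col j := by
  rw [urnColourDist_eq, inv_card_smul_sum_dirac_real_singleton]
  rfl

lemma isProbabilityMeasure_drawWithReplacement (hk : k ≤ n) :
    IsProbabilityMeasure (drawWithReplacement n c k col) := by
  refine @Measure.pi.instIsProbabilityMeasure _ _ _ _ _ fun i => ?_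
  have : NeZero n := ⟨(i.pos.trans_le hk).ne'⟩
  exact isProbabilityMeasure_urnColourDist col

lemma drawWithReplacement_real_singleton [NeZero n] (x : Fin k → Fin c) :
    (drawWithReplacement n c k col).real {x} = pmfWithReplacement col x := by
  have := isProbabilityMeasure_urnColourDist col
  simp only [drawWithReplacement, measureReal_def, Measure.pi_singleton, ENNReal.toReal_prod,
    pmfWithReplacement, ← urnColourDist_real_singleton]

lemma isProbabilityMeasure_drawWithoutReplacement (hk : k ≤ n) :
    IsProbabilityMeasure (drawWithoutReplacement n c k col) := by
  refine isProbabilityMeasure_inv_card_smul_sum_dirac _ _ (Finset.card_pos.1 ?_)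
  rw [card_filter_injective, Fintype.card_fin, Fintype.card_fin]
  exact Nat.descFactorial_pos.2 hk

lemma drawWithoutReplacement_real_singleton (x : Fin k → Fin c) :
    (drawWithoutReplacement n c k col).real {x} = pmfWithoutReplacement col x := by
  rw [drawWithoutReplacement, inv_card_smul_sum_dirac_real_singleton, Finset.filter_filter,
    card_filter_injective, Fintype.card_fin k]
  rfl

lemma tvDist_drawWithoutReplacement_drawWithReplacement_le [NeZero n] (hk : 2 * k ≤ n) :
    tvDist (drawWithoutReplacement n c k col) (drawWithReplacement n c k col) ≤
      2 * √(c - 1) * (k / n) := by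
  have := isProbabilityMeasure_drawWithoutReplacement col (k := k) (by lia)
  have := isProbabilityMeasure_drawWithReplacement col (k := k) (by lia)
  have sum_without : ∑ x : Fin k → Fin c, pmfWithoutReplacement col x = 1 := by
    simp [← drawWithoutReplacement_real_singleton]
  have sum_with : ∑ x : Fin k → Fin c, pmfWithReplacement col x = 1 := by
    simp [← drawWithReplacement_real_singleton]
  have sq_le := sq_sum_abs_sub_le_four_mul_relEntropy (pmfWithoutReplacement_nonneg col)
    (pmfWithReplacement_nonneg col) (fun _ => pmfWithoutReplacement_eq_zero) sum_without sum_with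
  have relEntropy_le := relEntropy_pmf_le col (k := k) (by simpa using hk)
  rw [Fintype.card_fin, Fintype.card_fin] at relEntropy_le
  calc _ ≤ ∑ x : Fin k → Fin c, |pmfWithoutReplacement col x - pmfWithReplacement col x| := by
        simpa only [drawWithoutReplacement_real_singleton, drawWithReplacement_real_singleton] using
          tvDist_le_sum_abs_sub (drawWithoutReplacement n c k col) (drawWithReplacement n c k col)
    _ ≤ √(2 ^ 2 * (c - 1) * (k / n) ^ 2) := Real.le_sqrt_of_sq_le (by linarith)
    _ = 2 * √(c - 1) * (k / n) := by
        rw [Real.sqrt_mul' _ (sq_nonneg _), Real.sqrt_mul (by positivity),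
          Real.sqrt_sq zero_le_two, Real.sqrt_sq (by positivity)]

end Laws

end Urn

open Urn in
/-- **Sampling with vs. without replacement in total variation** (Diaconis–Freedman).
If `k ≤ n` balls are drawn from an urn of `n` balls of `c` colours (colour assignment
`col : Fin n → Fin c`, corresponding to the `n`-type `Q(j) = #col⁻¹(j)/n`), then
`‖h(Q,n,k;·) − b(Q,n,k;·)‖_TV ≤ 2ck/n`. -/
theorem sampling_TV_le {n c k : ℕ} (hk : k ≤ n) (col : Fin n → Fin c) :
    tvDist (drawWithoutReplacement n c k col) (drawWithReplacement n c k col) ≤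
      (2 * c * k : ℝ) / n := by
  have := isProbabilityMeasure_drawWithoutReplacement col hk
  have := isProbabilityMeasure_drawWithReplacement col hk
  by_cases h_trivial : k = 0 ∨ c ≤ 1
  · have : Subsingleton (Fin k → Fin c) := by
      obtain rfl | hc := h_trivial
      · infer_instance
      · have := Fin.subsingleton_iff_le_one.2 hc
        infer_instance
    rw [tvDist_eq_zero_of_subsingleton]
    positivity
  have hn : 0 < n := by lia
  have : NeZero n := ⟨hn.ne'⟩
  have hc : (2 : ℝ) ≤ c := by exact_mod_cast (by lia : 2 ≤ c)
  obtain h | h := le_total (2 * k) n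
  · calc _ ≤ 2 * √(c - 1) * (k / n) :=
          tvDist_drawWithoutReplacement_drawWithReplacement_le col h
      _ ≤ 2 * c * (k / n) := by
          gcongr
          exact Real.sqrt_le_iff.2 ⟨by positivity, by nlinarith⟩
      _ = 2 * c * k / n := (mul_div_assoc _ _ _).symm
  · have h : (n : ℝ) ≤ 2 * k := mod_cast h
    refine (tvDist_le_two _ _).trans ((le_div_iff₀ (mod_cast hn)).2 ?_)
    nlinarith
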